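/- Let G be a finite Frobenius group with Frobenius kernel K and Frobenius complement H, suppose G has perfect order classes, and suppose H is not nilpotent and every prime divisor of |H| is 2 or q, where q is an odd prime. Then q = 3 or q = 5, and K is a homocyclic p-group (for some odd prime p) of rank 2 or of rank 4. -/

import Mathlib

/-- The number of elements of order `n` in the group `G`. -/
noncomputable def orderCount (G : Type*) [Group G] (n : ℕ) : ℕ :=
  Nat.card {g : G // orderOf g = n}

/-- A group has *perfect order classes* if, for every positive integer `n`, the number of
elements of order `n` is either zero or a divisor of the order of the group. -/
def PerfectOrderClasses (G : Type*) [Group G] : Prop :=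
  ∀ n : ℕ, 0 < n → orderCount G n = 0 ∨ orderCount G n ∣ Nat.card G

/-- `G` is a Frobenius group with Frobenius kernel `K` and Frobenius complement `H`:
`K` is a nontrivial proper normal subgroup, `H` a subgroup with `K ⊓ H = ⊥` and `KH = G`,
and the conjugation action of `H` on `K` is fixed-point-free. -/
def IsFrobeniusWith {G : Type*} [Group G] (K H : Subgroup G) : Prop :=
  K ≠ ⊥ ∧ K ≠ ⊤ ∧ K.Normal ∧ K ⊓ H = ⊥ ∧
    (∀ g : G, ∃ k ∈ K, ∃ h ∈ H, g = k * h) ∧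
    ∀ h ∈ H, h ≠ 1 → ∀ k ∈ K, k ≠ 1 → h * k * h⁻¹ ≠ k

/-- A nonzero number all of whose prime divisors equal `l` is a power of `l`. -/
theorem eq_prime_pow_of_forall_prime_dvd {l n : ℕ} (hn : n ≠ 0)
    (h : ∀ m : ℕ, m.Prime → m ∣ n → m = l) : ∃ c, n = l ^ c :=
  ⟨_, Nat.eq_prime_pow_of_unique_prime_dvd hn fun hm hmn => h _ hm hmn⟩

/-- If `x ≠ ±1` is odd, `s` is odd and `x ^ s - 1` is, up to sign, a power of `2`,
then `s = 1`. -/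
theorem eq_one_of_natAbs_odd_pow_sub_one_eq_two_pow {x : ℤ} {s c : ℕ} (hx : Odd x)
    (hx1 : 1 < x.natAbs) (hs : Odd s) (h : (x ^ s - 1).natAbs = 2 ^ c) : s = 1 := by
  have hd : (x - 1).natAbs ∣ 2 ^ c := by
    rw [← h, Int.natAbs_dvd_natAbs]
    simpa using sub_dvd_pow_sub_pow x 1 s
  obtain ⟨d, -, hd⟩ := (Nat.dvd_prime_pow Nat.prime_two).1 hd
  obtain ⟨t, rfl⟩ := hs
  have hpow : (2 : ℤ) ^ (d + 1) ∣ x ^ (2 * t + 1) - x := by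
    have h1 : (2 : ℤ) ^ (d + 1) ∣ x ^ 2 - 1 := by
      have h2 : (2 : ℤ) ^ d ∣ x - 1 := by
        rw [← Int.natAbs_dvd_natAbs, hd]; simp
      have h3 : (2 : ℤ) ∣ x + 1 := (hx.add_odd odd_one).two_dvd
      rw [show x ^ 2 - 1 = (x - 1) * (x + 1) by ring, pow_succ]
      exact mul_dvd_mul h2 h3
    rw [show x ^ (2 * t + 1) - x = ((x ^ 2) ^ t - 1 ^ t) * x by rw [← pow_mul]; ring]
    exact (h1.trans (sub_dvd_pow_sub_pow (x ^ 2) 1 t)).mul_right _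
  have hcd : c ≤ d := by
    by_contra! hlt
    have h1 : (2 : ℤ) ^ (d + 1) ∣ x ^ (2 * t + 1) - 1 := by
      rw [← Int.natAbs_dvd_natAbs, h, Int.natAbs_pow]
      exact pow_dvd_pow 2 hlt
    have h2 : (2 : ℤ) ^ (d + 1) ∣ x - 1 := by
      simpa using dvd_sub h1 hpow
    rw [← Int.natAbs_dvd_natAbs, hd, Int.natAbs_pow] at h2
    have := (Nat.pow_dvd_pow_iff_le_right (le_refl 2)).1 h2
    omega
  have hle : (x ^ (2 * t + 1) - 1).natAbs ≤ (x - 1).natAbs := by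
    rw [h, hd]; exact Nat.pow_le_pow_right (by norm_num) hcd
  by_contra ht
  have h3 : 3 ≤ x.natAbs := by
    obtain ⟨e, he⟩ := hx
    omega
  have h4 : x.natAbs ^ 3 ≤ (x ^ (2 * t + 1)).natAbs := by
    rw [Int.natAbs_pow]
    exact Nat.pow_le_pow_right (by omega) (by omega)
  have h5 : 9 * x.natAbs ≤ x.natAbs ^ 3 := by
    rw [pow_succ]; gcongr; nlinarith
  omega

/-- If `p > 1` and `s` are odd and `p ^ s - 1` or `p ^ s + 1` is a power of `2`, then `s = 1`. -/
theorem eq_one_of_odd_pow_near_two_pow {p s c : ℕ} (hp : Odd p) (hp1 : 1 < p) (hs : Odd s)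
    (h : p ^ s = 2 ^ c + 1 ∨ p ^ s + 1 = 2 ^ c) : s = 1 := by
  rcases h with h | h
  · refine eq_one_of_natAbs_odd_pow_sub_one_eq_two_pow (x := p) (c := c)
      (by exact_mod_cast hp) (by simpa using hp1) hs ?_
    have : (p : ℤ) ^ s = 2 ^ c + 1 := by exact_mod_cast h
    rw [this, add_sub_cancel_right, Int.natAbs_pow]; rfl
  · refine eq_one_of_natAbs_odd_pow_sub_one_eq_two_pow (x := -p) (c := c)
      (by rw [odd_neg]; exact_mod_cast hp) (by simpa using hp1) hs ?_
    have : (p : ℤ) ^ s + 1 = 2 ^ c := by exact_mod_cast h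
    rw [hs.neg_pow, show -(p : ℤ) ^ s - 1 = -(p ^ s + 1) by ring, this, Int.natAbs_neg,
      Int.natAbs_pow]; rfl

/-- If `x - 1` and `x + 1` multiply to a power of `2` for some `x > 1`, then `x = 3`. -/
theorem eq_three_of_sq_eq_two_pow_add_one {x c : ℕ} (hx : 1 < x) (h : x ^ 2 = 2 ^ c + 1) :
    x = 3 := by
  obtain ⟨y, rfl⟩ : ∃ y, x = y + 1 := ⟨x - 1, by omega⟩
  have hprod : y * (y + 2) = 2 ^ c := by nlinarith
  obtain ⟨a, -, ha⟩ := (Nat.dvd_prime_pow Nat.prime_two).1 (Dvd.intro _ hprod)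
  obtain ⟨b, -, hb⟩ := (Nat.dvd_prime_pow Nat.prime_two).1 (Dvd.intro_left _ hprod)
  rcases a with _ | _ | a
  · obtain rfl : y = 1 := by simpa using ha
    rcases b with _ | b
    · omega
    · rw [pow_succ] at hb; omega
  · omega
  · rcases b with _ | _ | b
    · omega
    · omega
    · rw [pow_add] at ha hb; omega

/-- If `p` is an odd prime and `p ^ (2 * s) - 1` is divisible by no primes but `2` and `q > 2`,
then `s = 1` or `p ^ (2 * s) = 3 ^ 4`. -/
theorem even_exponent_of_two_prime_divisors {p s q : ℕ} (hp : p.Prime) (hpo : Odd p)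
    (hq : 2 < q) (hs : 0 < s)
    (hdiv : ∀ l : ℕ, l.Prime → l ∣ p ^ (2 * s) - 1 → l = 2 ∨ l = q) :
    s = 1 ∨ (p = 3 ∧ s = 2) := by
  have hp1 := hp.one_lt
  have hps : 1 < p ^ s := Nat.one_lt_pow hs.ne' hp1
  have hfac : p ^ (2 * s) - 1 = (p ^ s + 1) * (p ^ s - 1) := by
    have := Nat.sq_sub_sq (p ^ s) 1
    rw [one_pow] at this
    rw [← this, ← pow_mul, mul_comm]
  have hpow : (∃ c, p ^ s + 1 = 2 ^ c) ∨ ∃ c, p ^ s = 2 ^ c + 1 := by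
    by_cases h : q ∣ p ^ s + 1
    · right
      have hq' : ¬ q ∣ p ^ s - 1 := fun h' => by
        have h2 := Nat.dvd_sub h h'
        have h3 : p ^ s + 1 - (p ^ s - 1) = 2 := by omega
        rw [h3] at h2
        exact absurd (Nat.le_of_dvd (by norm_num) h2) (by omega)
      obtain ⟨c, hc⟩ := eq_prime_pow_of_forall_prime_dvd (l := 2) (n := p ^ s - 1) (by omega)
        fun m hm hmd => (hdiv m hm (hfac ▸ hmd.mul_left _)).resolve_right
          fun hmq => hq' (hmq ▸ hmd)
      exact ⟨c, by omega⟩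
    · left
      exact eq_prime_pow_of_forall_prime_dvd (by omega)
        fun m hm hmd => (hdiv m hm (hfac ▸ hmd.mul_right _)).resolve_right
          fun hmq => h (hmq ▸ hmd)
  rcases Nat.even_or_odd s with ⟨t, rfl⟩ | hodd
  · right
    have ht : t ≠ 0 := by omega
    have hsq : p ^ (t + t) = (p ^ t) ^ 2 := by ring
    have hpt : 1 < p ^ t := Nat.one_lt_pow ht hp1
    rcases hpow with ⟨c, hc⟩ | ⟨c, hc⟩
    · exfalso
      obtain ⟨e, he⟩ := hpo.pow (n := t)
      rcases c with _ | _ | c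
      · omega
      · omega
      · rw [hsq, he, pow_add] at hc
        ring_nf at hc
        omega
    · have h3 := eq_three_of_sq_eq_two_pow_add_one hpt (hsq ▸ hc)
      have hp3 : p = 3 := (Nat.prime_dvd_prime_iff_eq hp Nat.prime_three).1
        (h3 ▸ dvd_pow_self p ht)
      subst hp3
      have : t = 1 := Nat.pow_right_injective (by norm_num : 2 ≤ 3) (by simpa using h3)
      omega
  · left
    rcases hpow with ⟨c, hc⟩ | ⟨c, hc⟩
    · exact eq_one_of_odd_pow_near_two_pow hpo hp1 hodd (Or.inr hc)
    · exact eq_one_of_odd_pow_near_two_pow hpo hp1 hodd (Or.inl hc)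

/-- If `p` is odd, `r` is odd and `q - 1` divides `p ^ r - 1`, whose prime divisors are among
`2` and the odd prime `q`, then `r = 1`. -/
theorem odd_exponent_of_two_prime_divisors {p r q : ℕ} (hp1 : 1 < p) (hpo : Odd p)
    (hq : q.Prime) (hr : Odd r)
    (hdiv : ∀ l : ℕ, l.Prime → l ∣ p ^ r - 1 → l = 2 ∨ l = q)
    (hq1 : q - 1 ∣ p ^ r - 1) : r = 1 := by
  by_contra hr1
  have hr0 : r ≠ 0 := hr.pos.ne'
  have hfac : (∑ i ∈ Finset.range r, p ^ i) * (p - 1) = p ^ r - 1 := by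
    exact geom_sum_mul_of_one_le hp1.le r
  set N := ∑ i ∈ Finset.range r, p ^ i with hN
  have hNodd : Odd N := by
    rw [hN, Finset.odd_sum_iff_odd_card_odd]
    rw [Finset.filter_true_of_mem fun i _ => hpo.pow, Finset.card_range]
    exact hr
  have hNr : r < N := by
    calc r = ∑ i ∈ Finset.range r, 1 := by simp
      _ < N := Finset.sum_lt_sum (fun i _ => Nat.one_le_pow _ _ (by omega))
        ⟨1, Finset.mem_range.2 (by omega), by simpa using hp1⟩
  obtain ⟨k, hk⟩ := eq_prime_pow_of_forall_prime_dvd (l := q) (n := N) (by omega)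
    fun m hm hmd => (hdiv m hm (hfac ▸ hmd.mul_right _)).resolve_left fun h2 => by
      subst h2
      exact (Nat.not_even_iff_odd.2 hNodd) (even_iff_two_dvd.2 hmd)
  have hk0 : k ≠ 0 := by rintro rfl; rw [pow_zero] at hk; omega
  have hqN : q ∣ p ^ r - 1 := hfac ▸ (hk ▸ dvd_pow_self q hk0 : q ∣ N).mul_right _
  obtain ⟨c, hc⟩ := eq_prime_pow_of_forall_prime_dvd (l := 2) (n := q - 1)
    (by have := hq.two_le; omega)
    fun m hm hmd => (hdiv m hm (hmd.trans hq1)).resolve_right fun h2 => by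
      subst h2
      have := Nat.le_of_dvd (by have := hm.two_le; omega) hmd
      have := hm.two_le
      omega
  have hqp : q ∣ p - 1 := by
    have : Fact q.Prime := ⟨hq⟩
    have h1 : (p : ZMod q) ^ r = 1 := by
      have h := (ZMod.natCast_eq_zero_iff _ _).2 hqN
      rw [Nat.cast_sub (Nat.one_le_pow _ _ (by omega))] at h
      push_cast at h
      exact sub_eq_zero.1 h
    have hp0 : (p : ZMod q) ≠ 0 := by
      intro h
      rw [h, zero_pow hr0] at h1
      exact zero_ne_one h1
    have h2 := ZMod.pow_card_sub_one_eq_one hp0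
    have h3 : Nat.Coprime r (q - 1) := by
      rw [hc]; exact (Nat.coprime_two_right.2 hr).pow_right c
    have h4 := Nat.dvd_gcd (orderOf_dvd_of_pow_eq_one h1) (orderOf_dvd_of_pow_eq_one h2)
    rw [h3.gcd_eq_one, Nat.dvd_one, orderOf_eq_one_iff] at h4
    rw [← ZMod.natCast_eq_zero_iff, Nat.cast_sub hp1.le, h4]
    simp
  have hqnp : ¬ q ∣ p := fun h => by
    have := Nat.dvd_sub h hqp
    rw [show p - (p - 1) = 1 by omega] at this
    exact hq.one_lt.ne' (Nat.dvd_one.1 this)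
  have : Fact q.Prime := ⟨hq⟩
  have hqodd : Odd q := by
    have h : Odd (q ^ k) := hk ▸ hNodd
    exact (Nat.odd_pow_iff hk0).1 h
  have hv := padicValNat.pow_sub_pow hqodd hp1 (by simpa using hqp) hqnp hr0
  rw [one_pow, ← hfac, padicValNat.mul (by omega) (by omega), hk, padicValNat.prime_pow] at hv
  have hkr : k = padicValNat q r := by omega
  have : q ^ k ∣ r := hkr ▸ pow_padicValNat_dvd
  have := Nat.le_of_dvd (by omega) this
  omega

/-- If the prime divisors of `p ^ r - 1` are among `2` and the odd prime `q`, and both `q` and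
`q - 1` divide it, then `q` is `3` or `5` and `r` is `2` or `4`. -/
theorem rank_and_prime_of_two_prime_divisors {p r q : ℕ} (hp : p.Prime) (hpo : Odd p)
    (hq : q.Prime) (hqo : Odd q) (hr : 2 ≤ r)
    (hdiv : ∀ l : ℕ, l.Prime → l ∣ p ^ r - 1 → l = 2 ∨ l = q)
    (hqd : q ∣ p ^ r - 1) (hq1 : q - 1 ∣ p ^ r - 1) :
    (q = 3 ∨ q = 5) ∧ (r = 2 ∨ r = 4) := by
  have hq2 : 2 < q := by
    have := hq.two_le
    obtain ⟨e, he⟩ := hqo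
    omega
  rcases Nat.even_or_odd r with ⟨s, rfl⟩ | hodd
  · rw [← two_mul] at *
    rcases even_exponent_of_two_prime_divisors hp hpo hq2 (by omega) hdiv with rfl | ⟨rfl, rfl⟩
    · refine ⟨Or.inl ?_, by omega⟩
      have hp3 : p ≠ 3 := by
        rintro rfl
        have h : q ∣ 2 ^ 3 := by simpa using hqd
        exact hq2.ne' ((Nat.prime_dvd_prime_iff_eq hq Nat.prime_two).1 (hq.dvd_of_dvd_pow h))
      have h3 : 3 ∣ p ^ (2 * 1) - 1 := by
        have hn : ¬ 3 ∣ p := fun h => hp3 ((Nat.prime_dvd_prime_iff_eq Nat.prime_three hp).1 h).symm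
        have : p % 3 = 1 ∨ p % 3 = 2 := by omega
        have hm : p ^ (2 * 1) % 3 = 1 := by
          rcases this with h | h <;> simp [Nat.pow_mod, h]
        omega
      rcases hdiv 3 Nat.prime_three h3 with h | h <;> omega
    · refine ⟨Or.inr ?_, by omega⟩
      rcases hdiv 5 Nat.prime_five (by norm_num) with h | h <;> omega
  · have := odd_exponent_of_two_prime_divisors hp.one_lt hpo hq hodd hdiv hq1
    omega

/-- The order of a group acting freely on a finite type divides the cardinality of the type. -/
theorem natCard_dvd_natCard_of_free {Γ X : Type*} [Group Γ] [MulAction Γ X]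
    (h : ∀ (g : Γ) (x : X), g • x = x → g = 1) : Nat.card Γ ∣ Nat.card X := by
  have hstab : ∀ x : X, MulAction.stabilizer Γ x = ⊥ := fun x =>
    (Subgroup.eq_bot_iff_forall _).2 fun g hg => h g x hg
  rw [Nat.card_congr (MulAction.selfEquivOrbitsQuotientProd hstab), Nat.card_prod]
  exact dvd_mul_left _ _

section FixedPointFreeAction

variable {A K : Type*} [Group A] [Group K] [MulDistribMulAction A K]

theorem orderOf_smul_of_mulDistribMulAction (a : A) (k : K) : orderOf (a • k) = orderOf k :=
  (MulDistribMulAction.toMulEquiv K a).orderOf_eq k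

/-- A group acting fixed-point-freely by automorphisms acts freely on the elements of a given
order `n ≠ 1`. -/
theorem natCard_dvd_orderCount (hf : ∀ a : A, a ≠ 1 → ∀ k : K, k ≠ 1 → a • k ≠ k)
    {n : ℕ} (hn : n ≠ 1) : Nat.card A ∣ orderCount K n := by
  let _ : MulAction A {k : K // orderOf k = n} :=
    { smul := fun a k => ⟨a • k.1, (orderOf_smul_of_mulDistribMulAction a k.1).trans k.2⟩
      one_smul := fun k => Subtype.ext (one_smul A k.1)
      mul_smul := fun a b k => Subtype.ext (mul_smul a b k.1) }
  refine natCard_dvd_natCard_of_free fun a k hak => ?_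
  by_contra ha
  refine hf a ha k.1 (fun hk => hn ?_) (congrArg Subtype.val hak)
  rw [← k.2, hk, orderOf_one]

theorem natCard_coprime_of_fixedPointFree [Finite K]
    (hf : ∀ a : A, a ≠ 1 → ∀ k : K, k ≠ 1 → a • k ≠ k) :
    (Nat.card A).Coprime (Nat.card K) := by
  let _ : MulAction A {k : K // k ≠ 1} :=
    { smul := fun a k => ⟨a • k.1, fun h => k.2 (by rw [← inv_smul_smul a k.1, h, smul_one])⟩
      one_smul := fun k => Subtype.ext (one_smul A k.1)
      mul_smul := fun a b k => Subtype.ext (mul_smul a b k.1) }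
  have hdvd : Nat.card A ∣ Nat.card {k : K // k ≠ 1} :=
    natCard_dvd_natCard_of_free fun a k hak => by
      by_contra ha
      exact hf a ha k.1 k.2 (congrArg Subtype.val hak)
  have hcard : Nat.card K = Nat.card {k : K // k ≠ 1} + 1 := by
    classical
    have := Fintype.ofFinite K
    rw [Nat.card_eq_fintype_card, Nat.card_eq_fintype_card, Fintype.card_subtype_compl,
      Fintype.card_subtype_eq, Nat.sub_add_cancel Fintype.card_pos]
  rw [hcard]
  exact Nat.Coprime.coprime_dvd_left hdvd (by simp)

/-- A finite group with a fixed-point-free group of automorphisms of even order is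
commutative. -/
theorem commute_of_fixedPointFree_of_even [Finite A] [Finite K]
    (hf : ∀ a : A, a ≠ 1 → ∀ k : K, k ≠ 1 → a • k ≠ k) (h2 : 2 ∣ Nat.card A) (x y : K) :
    x * y = y * x := by
  have : Fact (Nat.Prime 2) := ⟨Nat.prime_two⟩
  obtain ⟨z, hz⟩ := exists_prime_orderOf_dvd_card' 2 h2
  have hz1 : z ≠ 1 := by rintro rfl; simp at hz
  have hzz : z * z = 1 := by rw [← sq, ← hz, pow_orderOf_eq_one]
  refine MonoidHom.FixedPointFree.commute_all_of_involutive
    (φ := MulDistribMulAction.toMonoidHom K z) (fun k hk => ?_) (fun k => ?_) x y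
  · by_contra h
    exact hf z hz1 k h hk
  · simp [smul_smul, hzz]

/-- If the order of a fixed-point-free automorphism group equals the number of elements of
order `n ≠ 1`, then the action on these elements is transitive. -/
theorem exists_smul_eq_of_natCard_eq_orderCount [Finite A] [Finite K]
    (hf : ∀ a : A, a ≠ 1 → ∀ k : K, k ≠ 1 → a • k ≠ k) {n : ℕ} (hn : n ≠ 1)
    (hcard : Nat.card A = orderCount K n) {x y : K} (hx : orderOf x = n) (hy : orderOf y = n) :
    ∃ a : A, a • x = y := by
  let F : A → {k : K // orderOf k = n} := fun a =>
    ⟨a • x, (orderOf_smul_of_mulDistribMulAction a x).trans hx⟩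
  have hinj : Function.Injective F := fun a b hab => by
    by_contra hne
    refine hf (b⁻¹ * a) (fun h => hne (inv_mul_eq_one.1 h).symm) x (fun h => hn ?_) ?_
    · rw [← hx, h, orderOf_one]
    · rw [mul_smul, show a • x = b • x from congrArg Subtype.val hab, inv_smul_smul]
  obtain ⟨a, ha⟩ := (hinj.bijective_of_nat_card_le hcard.ge).2 ⟨y, hy⟩
  exact ⟨a, congrArg Subtype.val ha⟩

/-- A group acting fixed-point-freely on a nontrivial cyclic group is commutative. -/
theorem commute_of_fixedPointFree_of_isCyclic [IsCyclic K] [Nontrivial K]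
    (hf : ∀ a : A, a ≠ 1 → ∀ k : K, k ≠ 1 → a • k ≠ k) (a b : A) : a * b = b * a := by
  obtain ⟨g, hg⟩ := IsCyclic.exists_generator (α := K)
  have hg1 : g ≠ 1 := by
    rintro rfl
    obtain ⟨k, hk⟩ := exists_ne (1 : K)
    exact hk (by simpa [Subgroup.mem_zpowers_iff, eq_comm] using hg k)
  obtain ⟨m, hm⟩ := Subgroup.mem_zpowers_iff.1 (hg (a • g))
  obtain ⟨n, hn⟩ := Subgroup.mem_zpowers_iff.1 (hg (b • g))
  have hab : (a * b) • g = (b * a) • g := by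
    rw [mul_smul, mul_smul, ← hn, ← hm, smul_zpow', smul_zpow', ← hm, ← hn, ← zpow_mul,
      ← zpow_mul, mul_comm]
  by_contra hne
  refine hf ((b * a)⁻¹ * (a * b)) (fun h => hne (inv_mul_eq_one.1 h).symm) g hg1 ?_
  rw [mul_smul, hab, inv_smul_smul]

end FixedPointFreeAction

/-- In a commutative group the numbers of elements of coprime orders multiply. -/
theorem orderCount_mul_of_coprime {K : Type*} [CommGroup K] {m n : ℕ} (hm : 0 < m) (hn : 0 < n)
    (hmn : m.Coprime n) : orderCount K (m * n) = orderCount K m * orderCount K n := by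
  rw [orderCount, orderCount, orderCount, ← Nat.card_prod]
  have hcop : ∀ {x y : K}, orderOf x ∣ m → orderOf y ∣ n →
      orderOf (x * y) = orderOf x * orderOf y := fun hx hy =>
    (Commute.all _ _).orderOf_mul_eq_mul_orderOf_of_coprime
      ((hmn.coprime_dvd_left hx).coprime_dvd_right hy)
  symm
  refine Nat.card_congr (Equiv.ofBijective
    (fun z : {x : K // orderOf x = m} × {y : K // orderOf y = n} =>
      (⟨z.1.1 * z.2.1, by rw [hcop z.1.2.dvd z.2.2.dvd, z.1.2, z.2.2]⟩ :
        {z : K // orderOf z = m * n})) ⟨?_, ?_⟩)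
  · rintro ⟨⟨x, hx⟩, ⟨y, hy⟩⟩ ⟨⟨x', hx'⟩, ⟨y', hy'⟩⟩ h
    have h1 : x * y = x' * y' := congrArg Subtype.val h
    have h2 : x / x' = y' / y := by rw [div_eq_div_iff_mul_eq_mul, h1, mul_comm]
    have hxm : (x / x') ^ m = 1 := by
      rw [div_pow, ← hx, pow_orderOf_eq_one, hx, ← hx', pow_orderOf_eq_one, div_one]
    have hyn : (x / x') ^ n = 1 := by
      rw [h2, div_pow, ← hy, pow_orderOf_eq_one, hy, ← hy', pow_orderOf_eq_one, div_one]
    have h3 : x / x' = 1 := by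
      rw [← orderOf_eq_one_iff, ← Nat.dvd_one, ← hmn.gcd_eq_one]
      exact Nat.dvd_gcd (orderOf_dvd_of_pow_eq_one hxm) (orderOf_dvd_of_pow_eq_one hyn)
    have h4 : y' / y = 1 := h2 ▸ h3
    simp only [Prod.mk.injEq, Subtype.mk.injEq]
    exact ⟨div_eq_one.1 h3, (div_eq_one.1 h4).symm⟩
  · rintro ⟨z, hz⟩
    have hbez : (m : ℤ) * m.gcdA n + n * m.gcdB n = 1 := by
      rw [← Nat.gcd_eq_gcd_ab, hmn.gcd_eq_one, Nat.cast_one]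
    have hzz : z ^ ((m : ℤ) * n) = 1 := by
      have := pow_orderOf_eq_one z
      rw [hz] at this
      exact_mod_cast this
    have hx : orderOf (z ^ ((n : ℤ) * m.gcdB n)) ∣ m := orderOf_dvd_of_pow_eq_one <| by
      rw [← zpow_natCast, ← zpow_mul,
        show (n : ℤ) * m.gcdB n * m = m * n * m.gcdB n by ring, zpow_mul, hzz, one_zpow]
    have hy : orderOf (z ^ ((m : ℤ) * m.gcdA n)) ∣ n := orderOf_dvd_of_pow_eq_one <| by
      rw [← zpow_natCast, ← zpow_mul,
        show (m : ℤ) * m.gcdA n * n = m * n * m.gcdA n by ring, zpow_mul, hzz, one_zpow]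
    have hprod : z ^ ((n : ℤ) * m.gcdB n) * z ^ ((m : ℤ) * m.gcdA n) = z := by
      rw [← zpow_add, add_comm, hbez, zpow_one]
    have hord := hcop hx hy
    rw [hprod, hz] at hord
    have hxle := Nat.le_of_dvd hm hx
    have hyle := Nat.le_of_dvd hn hy
    have hxm : orderOf (z ^ ((n : ℤ) * m.gcdB n)) = m := by
      refine le_antisymm hxle (Nat.le_of_mul_le_mul_right ?_ hn)
      rw [hord]; gcongr
    have hyn : orderOf (z ^ ((m : ℤ) * m.gcdA n)) = n := by
      refine le_antisymm hyle (Nat.le_of_mul_le_mul_left ?_ hm)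
      rw [hord]; gcongr
    exact ⟨(⟨_, hxm⟩, ⟨_, hyn⟩), Subtype.ext hprod⟩

theorem orderCount_ne_zero {K : Type*} [Group K] [Finite K] {n : ℕ} {x : K}
    (hx : orderOf x = n) : orderCount K n ≠ 0 := by
  have : Nonempty {g : K // orderOf g = n} := ⟨⟨x, hx⟩⟩
  exact Nat.card_pos.ne'

/-- A finite abelian `p`-group is a product of nontrivial cyclic groups of `p`-power order. -/
theorem exists_equiv_pi_zmod_prime_pow {K : Type*} [CommGroup K] [Finite K] {p m : ℕ}
    (hp : p.Prime) (hK : Nat.card K = p ^ m) :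
    ∃ (r : ℕ) (e : Fin r → ℕ), (∀ i, 0 < e i) ∧
      Nonempty (K ≃* (∀ i, Multiplicative (ZMod (p ^ e i)))) := by
  obtain ⟨ι, _, n, hn, ⟨f⟩⟩ := CommGroup.equiv_prod_multiplicative_zmod_of_finite K
  have hprod : ∏ i, n i = p ^ m := by
    rw [← hK, Nat.card_congr f.toEquiv, Nat.card_pi]
    exact Finset.prod_congr rfl fun i _ => by
      rw [Nat.card_congr Multiplicative.toAdd, Nat.card_zmod]
  have hpow : ∀ i, ∃ e, n i = p ^ e := fun i => by
    obtain ⟨e, -, he⟩ := (Nat.dvd_prime_pow hp).1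
      (hprod ▸ Finset.dvd_prod_of_mem n (Finset.mem_univ i))
    exact ⟨e, he⟩
  choose e he using hpow
  obtain rfl : n = fun i => p ^ e i := funext he
  let σ := (Fintype.equivFin ι).symm
  refine ⟨Fintype.card ι, fun i => e (σ i), fun i => Nat.pos_of_ne_zero fun h => ?_,
    ⟨f.trans 
      { (Equiv.piCongrLeft (fun i => Multiplicative (ZMod (p ^ e i))) σ).symm with
        map_mul' := fun _ _ => rfl }⟩⟩
  have := hn (σ i)
  simp [h] at this

/-- The number of elements of order `p` in a product of `r` nontrivial cyclic `p`-groups. -/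
theorem orderCount_add_one_of_equiv_pi_zmod {K : Type*} [CommGroup K] [Finite K] {p r : ℕ}
    (hp : p.Prime) {e : Fin r → ℕ} (he : ∀ i, 0 < e i)
    (f : K ≃* (∀ i, Multiplicative (ZMod (p ^ e i)))) : orderCount K p + 1 = p ^ r := by
  classical
  have := Fintype.ofFinite K
  have : Fact p.Prime := ⟨hp⟩
  have h1 : orderCount K p + 1 = Nat.card {k : K // k ^ p = 1} := by
    have h := sum_card_orderOf_eq_card_pow_eq_one (G := K) hp.ne_zero
    rw [hp.sum_divisors] at h
    have h0 : (Finset.univ.filter fun k : K => orderOf k = 1).card = 1 := by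
      simp only [orderOf_eq_one_iff]
      exact Finset.card_eq_one.2 ⟨1, by ext; simp⟩
    rw [orderCount, Nat.card_eq_fintype_card, Nat.card_eq_fintype_card, Fintype.card_subtype,
      Fintype.card_subtype, ← h, h0]
  have h2 : {k : K // k ^ p = 1} ≃
      ∀ i, (powMonoidHom p : Multiplicative (ZMod (p ^ e i)) →* _).ker :=
    (f.toEquiv.subtypeEquiv (q := fun x => ∀ i, x i ^ p = 1) fun k => by
      rw [← f.map_eq_one_iff, map_pow, funext_iff]; rfl).trans
      (Equiv.subtypePiEquivPi (p := fun i (x : Multiplicative (ZMod (p ^ e i))) => x ^ p = 1))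
  rw [h1, Nat.card_congr h2, Nat.card_pi]
  have hi : ∀ i, Nat.card (powMonoidHom p : Multiplicative (ZMod (p ^ e i)) →* _).ker = p :=
    fun i => by
      rw [IsCyclic.card_powMonoidHom_ker, Nat.card_congr Multiplicative.toAdd, Nat.card_zmod]
      exact Nat.gcd_eq_right (dvd_pow_self p (he i).ne')
  rw [Finset.prod_congr rfl fun i _ => hi i]
  simp

/-- If the automorphisms act transitively on the elements of order `p`, then a product of
cyclic `p`-groups is homocyclic. -/
theorem exponent_eq_of_transitive {K : Type*} [CommGroup K] {p r : ℕ}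
    (hp : p.Prime) {e : Fin r → ℕ} (he : ∀ i, 0 < e i)
    (f : K ≃* (∀ i, Multiplicative (ZMod (p ^ e i))))
    (ht : ∀ x y : K, orderOf x = p → orderOf y = p → ∃ φ : K ≃* K, φ x = y) (i j : Fin r) :
    e i = e j := by
  suffices h : ∀ i j, e i ≤ e j from le_antisymm (h i j) (h j i)
  clear i j
  intro i j
  let g : ∀ i, Multiplicative (ZMod (p ^ e i)) := fun i => Multiplicative.ofAdd 1
  have hg : ∀ i, orderOf (g i) = p ^ e i := fun i => by
    rw [orderOf_ofAdd_eq_addOrderOf, ZMod.addOrderOf_one]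
  let u : ∀ i, K := fun i => f.symm (Pi.mulSingle i (g i))
  have hu : ∀ i, orderOf (u i) = p ^ e i := fun i => by
    rw [← hg i, f.symm.orderOf_eq]
    exact orderOf_injective (MonoidHom.mulSingle (fun i => Multiplicative (ZMod (p ^ e i))) i)
      (Pi.mulSingle_injective (M := fun i => Multiplicative (ZMod (p ^ e i))) i) (g i)
  have hx : ∀ i, orderOf (u i ^ p ^ (e i - 1)) = p := fun i => by
    rw [orderOf_pow_of_dvd (pow_ne_zero _ hp.ne_zero), hu, Nat.pow_div (by omega) hp.pos]
    · have := he i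
      rw [show e i - (e i - 1) = 1 by omega, pow_one]
    · rw [hu]; exact pow_dvd_pow _ (by omega)
  obtain ⟨φ, hφ⟩ := ht _ _ (hx i) (hx j)
  by_contra! hlt
  have h1 : f (u j ^ p ^ (e j - 1)) j = 1 := by
    have h2 : p ^ e j ∣ p ^ (e i - 1) := pow_dvd_pow _ (by omega)
    rw [← hφ, map_pow, map_pow, Pi.pow_apply, ← orderOf_dvd_iff_pow_eq_one]
    refine dvd_trans ?_ h2
    have h3 := orderOf_dvd_natCard (f (φ (u i)) j)
    rwa [Nat.card_congr Multiplicative.toAdd, Nat.card_zmod] at h3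
  have h2 : g j ^ p ^ (e j - 1) = 1 := by
    simpa [u] using h1
  have h3 := orderOf_dvd_of_pow_eq_one h2
  rw [hg, Nat.pow_dvd_pow_iff_le_right hp.one_lt] at h3
  have := he j
  omega

/-- Let `A` act fixed-point-freely on a nontrivial finite abelian group `K` such that the number
of elements of each order of `K` divides `|K| |A|`. Then `K` is a homocyclic `p`-group of some
rank `r`, and `|A| = p ^ r - 1`. -/
theorem exists_homocyclic_of_fixedPointFree {A K : Type*} [Group A] [CommGroup K] [Finite A]
    [Finite K] [Nontrivial A] [Nontrivial K] [MulDistribMulAction A K]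
    (hf : ∀ a : A, a ≠ 1 → ∀ k : K, k ≠ 1 → a • k ≠ k)
    (hc : ∀ n, n ∣ Nat.card K → orderCount K n = 0 ∨ orderCount K n ∣ Nat.card K * Nat.card A) :
    ∃ p k r : ℕ, p.Prime ∧ p ∣ Nat.card K ∧ 0 < k ∧ 0 < r ∧ Nat.card A = p ^ r - 1 ∧
      Nonempty (K ≃* (Fin r → Multiplicative (ZMod (p ^ k)))) := by
  have hcop := natCard_coprime_of_fixedPointFree hf
  obtain ⟨p, hp, hpK⟩ := Nat.exists_prime_and_dvd (Finite.one_lt_card (α := K)).ne'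
  have : Fact p.Prime := ⟨hp⟩
  obtain ⟨x, hx⟩ := exists_prime_orderOf_dvd_card' p hpK
  obtain ⟨m, hm⟩ : ∃ m, Nat.card K = p ^ m := by
    refine eq_prime_pow_of_forall_prime_dvd Nat.card_pos.ne' fun l hl hlK => ?_
    by_contra hlp
    have : Fact l.Prime := ⟨hl⟩
    have hpl : p.Coprime l := (Nat.coprime_primes hp hl).2 (Ne.symm hlp)
    obtain ⟨y, hy⟩ := exists_prime_orderOf_dvd_card' l hlK
    have hmul := orderCount_mul_of_coprime (K := K) hp.pos hl.pos hpl
    have hne : orderCount K (p * l) ≠ 0 := by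
      rw [hmul]
      exact mul_ne_zero (orderCount_ne_zero hx) (orderCount_ne_zero hy)
    have hdvd := (hc _ (hpl.mul_dvd_of_dvd_of_dvd hpK hlK)).resolve_left hne
    rw [hmul] at hdvd
    have h1 : Nat.card A ∣ Nat.card K := Nat.dvd_of_mul_dvd_mul_right Nat.card_pos
      ((mul_dvd_mul (natCard_dvd_orderCount hf hp.ne_one)
        (natCard_dvd_orderCount hf hl.ne_one)).trans hdvd)
    exact (Finite.one_lt_card (α := A)).ne' (Nat.eq_one_of_dvd_coprimes hcop dvd_rfl h1)
  obtain ⟨r, e, he, ⟨f⟩⟩ := exists_equiv_pi_zmod_prime_pow hp hm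
  have hr : orderCount K p + 1 = p ^ r := orderCount_add_one_of_equiv_pi_zmod hp he f
  have hr0 : 0 < r := by
    refine Nat.pos_of_ne_zero fun h => orderCount_ne_zero hx ?_
    subst h
    simpa using hr
  have hA : Nat.card A = orderCount K p := by
    refine Nat.dvd_antisymm (natCard_dvd_orderCount hf hp.ne_one) ?_
    have h1 := (hc p hpK).resolve_left (orderCount_ne_zero hx)
    rw [hm] at h1
    refine Nat.Coprime.dvd_of_dvd_mul_left (Nat.Coprime.pow_right m ?_) h1
    refine ((Nat.Prime.coprime_iff_not_dvd hp).2 fun h => ?_).symm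
    exact hp.one_lt.ne' (Nat.dvd_one.1 ((Nat.dvd_add_right h).1 (hr ▸ dvd_pow_self p hr0.ne')))
  have heq := exponent_eq_of_transitive hp he f fun x y hx hy => by
    obtain ⟨a, ha⟩ := exists_smul_eq_of_natCard_eq_orderCount hf hp.ne_one hA hx hy
    exact ⟨MulDistribMulAction.toMulEquiv K a, ha⟩
  obtain ⟨k, hk⟩ : ∃ k, e = fun _ => k := ⟨e ⟨0, hr0⟩, funext fun i => heq i _⟩
  subst hk
  exact ⟨p, k, r, hp, hpK, he ⟨0, hr0⟩, hr0, by omega, ⟨f⟩⟩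

section Frobenius

variable {G : Type*} [Group G] {K H : Subgroup G}

theorem natCard_mul_natCard_eq_of_isFrobeniusWith (hF : IsFrobeniusWith K H) :
    Nat.card K * Nat.card H = Nat.card G := by
  obtain ⟨-, -, hKn, hinf, hsup, -⟩ := hF
  refine Subgroup.IsComplement'.card_mul_card
    (Subgroup.isComplement'_of_disjoint_and_mul_eq_univ (disjoint_iff.2 hinf) ?_)
  refine Set.eq_univ_of_forall fun g => ?_
  obtain ⟨k, hk, h, hh, rfl⟩ := hsup g
  exact Set.mul_mem_mul hk hh

/-- Elements whose order is prime to the index of a normal subgroup lie in the subgroup. -/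
theorem orderCount_eq_of_coprime_index [K.Normal] {n : ℕ} (hn : n.Coprime K.index) :
    orderCount G n = orderCount K n := by
  refine (Nat.card_congr ?_).symm
  refine
    { toFun := fun k => ⟨k.1.1, (Subgroup.orderOf_coe k.1).trans k.2⟩
      invFun := fun g => ⟨⟨g.1, ?_⟩, ?_⟩
      left_inv := fun _ => rfl
      right_inv := fun _ => rfl }
  · rw [← QuotientGroup.eq_one_iff, ← orderOf_eq_one_iff, ← Nat.dvd_one, ← hn.gcd_eq_one]
    refine Nat.dvd_gcd ?_ (orderOf_dvd_natCard _)
    exact (orderOf_map_dvd (QuotientGroup.mk' K) g.1).trans g.2.dvd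
  · rw [← Subgroup.orderOf_coe]
    exact g.2

/-- In a Frobenius group with abelian kernel `K`, the group `K × (ℤ/q)ˣ` acts freely on the
elements of prime order `q` not dividing `|K|`. -/
theorem natCard_mul_pred_dvd_orderCount (hF : IsFrobeniusWith K H)
    (hcomm : ∀ x ∈ K, ∀ y ∈ K, x * y = y * x) {q : ℕ} (hq : q.Prime) (hqK : ¬ q ∣ Nat.card K) :
    Nat.card K * (q - 1) ∣ orderCount G q := by
  obtain ⟨-, -, hKn, hinf, hsup, hfree⟩ := hF
  have : Fact q.Prime := ⟨hq⟩
  have hval : ∀ u : (ZMod q)ˣ, (u : ZMod q).val.Coprime q := fun u => ZMod.val_coe_unit_coprime u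
  let _ : MulAction (K × (ZMod q)ˣ) {g : G // orderOf g = q} :=
    { smul := fun c g => ⟨c.1 * g.1 ^ (c.2 : ZMod q).val * (c.1 : G)⁻¹, by
        have h := (MulAut.conj (c.1 : G)).orderOf_eq (g.1 ^ (c.2 : ZMod q).val)
        rw [MulAut.conj_apply] at h
        rw [h, Nat.Coprime.orderOf_pow, g.2]
        rw [g.2]; exact (hval c.2).symm⟩
      one_smul := fun g => Subtype.ext <| by
        show ((1 : K) : G) * g.1 ^ ((1 : (ZMod q)ˣ) : ZMod q).val * ((1 : K) : G)⁻¹ = g.1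
        simp [ZMod.val_one]
      mul_smul := fun c d g => Subtype.ext <| by
        show ((c.1 * d.1 : K) : G) * g.1 ^ ((c.2 * d.2 : (ZMod q)ˣ) : ZMod q).val *
            ((c.1 * d.1 : K) : G)⁻¹ =
          c.1 * (d.1 * g.1 ^ (d.2 : ZMod q).val * (d.1 : G)⁻¹) ^ (c.2 : ZMod q).val * (c.1 : G)⁻¹
        have h : g.1 ^ ((c.2 * d.2 : (ZMod q)ˣ) : ZMod q).val =
            (g.1 ^ (d.2 : ZMod q).val) ^ (c.2 : ZMod q).val := by
          rw [← pow_mul, pow_eq_pow_iff_modEq, g.2, Units.val_mul, ZMod.val_mul, mul_comm]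
          exact Nat.mod_modEq _ _
        rw [h, conj_pow, Subgroup.coe_mul]
        group }
  have hcard : Nat.card (K × (ZMod q)ˣ) = Nat.card K * (q - 1) := by
    rw [Nat.card_prod, Nat.card_eq_fintype_card (α := (ZMod q)ˣ), ZMod.card_units]
  rw [← hcard]
  refine natCard_dvd_natCard_of_free ?_
  rintro ⟨k, u⟩ ⟨g, hg⟩ h
  have h1 : (k : G) * g ^ (u : ZMod q).val * (k : G)⁻¹ = g := congrArg Subtype.val h
  have hgK : g ∉ K := fun hmem => hqK <| by
    have h2 := orderOf_dvd_natCard (⟨g, hmem⟩ : K)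
    rwa [Subgroup.orderOf_mk, hg] at h2
  have hgbar : orderOf (g : G ⧸ K) = q := by
    refine orderOf_eq_prime ?_ fun h => hgK ((QuotientGroup.eq_one_iff g).1 h)
    rw [← QuotientGroup.mk_pow, ← hg, pow_orderOf_eq_one, QuotientGroup.mk_one]
  have hu : u = 1 := by
    have h2 : (g : G ⧸ K) ^ (u : ZMod q).val = (g : G ⧸ K) ^ 1 := by
      have h3 := congrArg (QuotientGroup.mk : G → G ⧸ K) h1
      rw [QuotientGroup.mk_mul, QuotientGroup.mk_mul, QuotientGroup.mk_inv,
        (QuotientGroup.eq_one_iff (k : G)).2 k.2] at h3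
      simpa using h3
    rw [pow_eq_pow_iff_modEq, hgbar, ← ZMod.natCast_eq_natCast_iff] at h2
    exact Units.ext (by simpa using h2)
  have hk : k = 1 := by
    rw [hu, Units.val_one, ZMod.val_one, pow_one] at h1
    obtain ⟨l, hl, t, ht, rfl⟩ := hsup g
    by_contra hk
    have ht1 : t ≠ 1 := by
      rintro rfl
      exact hgK (by simpa using hl)
    refine hfree t ht ht1 k k.2 (fun h => hk (Subtype.ext h)) ?_
    have h2 : (k : G) * (l * t) = l * t * k := mul_inv_eq_iff_eq_mul.1 h1
    rw [← mul_assoc, hcomm k k.2 l hl, mul_assoc, mul_assoc, mul_right_inj] at h2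
    rw [← h2, mul_inv_cancel_right]
  rw [hu, hk]
  rfl

end Frobenius

/-- If a finite Frobenius group with perfect order classes has a non-nilpotent Frobenius
complement that is a `{2,q}`-group for an odd prime `q`, then `q = 3` or `q = 5`, and the
Frobenius kernel is homocyclic of rank 2 or 4 over an odd prime. -/
theorem frobenius_perfectOrderClasses_two_q_complement
    {G : Type*} [Group G] [Fintype G] (K H : Subgroup G)
    (hFrob : IsFrobeniusWith K H) (hpoc : PerfectOrderClasses G)
    (q : ℕ) (hq : q.Prime) (hqodd : Odd q)
    (hnotnil : ¬ Group.IsNilpotent H)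
    (hdiv : ∀ p : ℕ, p.Prime → p ∣ Nat.card H → p = 2 ∨ p = q) :
    (q = 3 ∨ q = 5) ∧
      ∃ p k r : ℕ, p.Prime ∧ Odd p ∧ 0 < k ∧ (r = 2 ∨ r = 4) ∧
        Nonempty (K ≃* (Fin r → Multiplicative (ZMod (p ^ k)))) := by
  have hprimes : ∀ l : ℕ, l.Prime → ∃ m : ℕ, m.Prime ∧ m ∣ Nat.card H ∧ m ≠ l := by
    intro l hl
    by_contra! hcon
    obtain ⟨c, hcH⟩ := eq_prime_pow_of_forall_prime_dvd (l := l) Nat.card_pos.ne' hcon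
    have : Fact l.Prime := ⟨hl⟩
    exact hnotnil (IsPGroup.of_card hcH).isNilpotent
  have h2H : 2 ∣ Nat.card H := by
    obtain ⟨m, hm, hmH, hmq⟩ := hprimes q hq
    exact (hdiv m hm hmH).resolve_right hmq ▸ hmH
  have hqH : q ∣ Nat.card H := by
    obtain ⟨m, hm, hmH, hm2⟩ := hprimes 2 Nat.prime_two
    exact (hdiv m hm hmH).resolve_left hm2 ▸ hmH
  have hcardG := natCard_mul_natCard_eq_of_isFrobeniusWith hFrob
  obtain ⟨hK1, -, hKn, -, -, hfree⟩ := id hFrob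
  have : Nontrivial K := (Subgroup.nontrivial_iff_ne_bot K).2 hK1
  have : Nontrivial H := by
    refine Finite.one_lt_card_iff_nontrivial.1 ?_
    exact lt_of_lt_of_le (by norm_num) (Nat.le_of_dvd Nat.card_pos h2H)
  let _ : MulDistribMulAction H K :=
    MulDistribMulAction.compHom K ((MulAut.conjNormal (H := K)).comp H.subtype)
  have hf : ∀ a : H, a ≠ 1 → ∀ k : K, k ≠ 1 → a • k ≠ k := fun a ha k hk h =>
    hfree a a.2 (fun h => ha (Subtype.ext h)) k k.2 (fun h => hk (Subtype.ext h))
      (congrArg Subtype.val h)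
  have hcomm := commute_of_fixedPointFree_of_even hf h2H
  have hcop := natCard_coprime_of_fixedPointFree hf
  have hindex : K.index = Nat.card H := by
    have := K.card_mul_index
    rw [← hcardG] at this
    exact Nat.eq_of_mul_eq_mul_left Nat.card_pos this
  let _ : CommGroup K := { (inferInstance : Group K) with mul_comm := hcomm }
  obtain ⟨p, k, r, hp, hpK, hk, hr, hcardH, ⟨f⟩⟩ := exists_homocyclic_of_fixedPointFree hf
    fun n hn => by
      have h1 := hpoc n (Nat.pos_of_dvd_of_pos hn Nat.card_pos)
      rwa [orderCount_eq_of_coprime_index (K := K)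
        (hindex ▸ hcop.symm.coprime_dvd_left hn), ← hcardG] at h1
  have hpodd : Odd p := hp.odd_of_ne_two fun h => by
    rw [h] at hpK
    exact absurd (Nat.eq_one_of_dvd_coprimes hcop h2H hpK) (by norm_num)
  have hr2 : 2 ≤ r := by
    by_contra! hlt
    obtain rfl : r = 1 := by omega
    have : IsCyclic K := ((f.trans (MulEquiv.piUnique _)).isCyclic).2 inferInstance
    refine hnotnil ?_
    let _ : CommGroup H := { (inferInstance : Group H) with
      mul_comm := commute_of_fixedPointFree_of_isCyclic hf }
    exact CommGroup.isNilpotent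
  have hq1 : q - 1 ∣ Nat.card H := by
    have : Fact q.Prime := ⟨hq⟩
    obtain ⟨g, hg⟩ := exists_prime_orderOf_dvd_card' (G := G) q
      (hcardG ▸ hqH.mul_left (Nat.card K))
    have h1 := (hpoc q hq.pos).resolve_left (orderCount_ne_zero hg)
    rw [← hcardG] at h1
    refine Nat.dvd_of_mul_dvd_mul_left Nat.card_pos
      ((natCard_mul_pred_dvd_orderCount hFrob ?_ hq ?_).trans h1)
    · exact fun x hx y hy => congrArg Subtype.val (hcomm ⟨x, hx⟩ ⟨y, hy⟩)
    · exact fun h => hq.one_lt.ne' (Nat.eq_one_of_dvd_coprimes hcop hqH h)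
  rw [hcardH] at hdiv hqH hq1
  obtain ⟨hq35, hr24⟩ := rank_and_prime_of_two_prime_divisors hp hpodd hq hqodd hr2 hdiv hqH hq1
  exact ⟨hq35, p, k, r, hp, hpodd, hk, hr24, ⟨f⟩⟩
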